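/- Let S be a strongly left reversible semitopological semigroup (every separable closed subsemigroup of S is left reversible) and K a weakly compact convex subset of a Banach space. Then every separately weakly continuous nonexpansive action of S on K has a common fixed point. -/

import Mathlib

open Set TopologicalSpace

/-- existence of a co-invariant closed set -/
theorem aux_coinv {T X : Type*} [Semigroup T] [TopologicalSpace T] [Nonempty T]
    [TopologicalSpace X] [CompactSpace X] [T2Space X] [Nonempty X]
    (hmulR : ∀ t : T, Continuous fun s => s * t)
    (hrev : ∀ I J : Set T, I.Nonempty → J.Nonempty →
        (∀ i ∈ I, ∀ a, i * a ∈ I) → (∀ j ∈ J, ∀ a, j * a ∈ J) →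
        IsClosed I → IsClosed J → (I ∩ J).Nonempty)
    (f : T → X → X) (hf : ∀ s, Continuous (f s)) (hft : ∀ x, Continuous fun t => f t x)
    (hmul : ∀ s t x, f (s * t) x = f s (f t x)) :
    ∃ Z : Set X, IsClosed Z ∧ Z.Nonempty ∧ ∀ s, Z ⊆ f s '' Z := by
  let ι := {I : Set T // I.Nonempty ∧ (∀ i ∈ I, ∀ a, i * a ∈ I) ∧ IsClosed I}
  have : Nonempty ι := ⟨⟨univ, univ_nonempty, by simp, isClosed_univ⟩⟩
  let B : ι → Set X := fun I => closure (image2 f I.1 univ)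
  have hBmono : ∀ I J : ι, I.1 ⊆ J.1 → B I ⊆ B J := fun I J h =>
    closure_mono (image2_subset_right h)
  have hBne : ∀ I : ι, (B I).Nonempty := fun I =>
    ((I.2.1).image2 univ_nonempty).closure
  have hinf : ∀ I J : ι, ∃ L : ι, L.1 ⊆ I.1 ∧ L.1 ⊆ J.1 := fun I J =>
    ⟨⟨I.1 ∩ J.1, hrev _ _ I.2.1 J.2.1 I.2.2.1 J.2.2.1 I.2.2.2 J.2.2.2,
      fun i hi a => ⟨I.2.2.1 i hi.1 a, J.2.2.1 i hi.2 a⟩, I.2.2.2.inter J.2.2.2⟩,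
      inter_subset_left, inter_subset_right⟩
  refine ⟨⋂ I, B I, isClosed_iInter fun _ => isClosed_closure, ?_, ?_⟩
  · refine IsCompact.nonempty_iInter_of_directed_nonempty_isCompact_isClosed B ?_ hBne
      (fun _ => isClosed_closure.isCompact) (fun _ => isClosed_closure)
    intro I J
    obtain ⟨L, h1, h2⟩ := hinf I J
    exact ⟨L, hBmono _ _ h1, hBmono _ _ h2⟩
  · intro s z hz
    have key : ∀ I : ι, (B I ∩ f s ⁻¹' {z}).Nonempty := by
      intro I
      let sI : ι := ⟨closure ((fun t => s * t) '' I.1), (I.2.1.image _).closure, by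
        intro i hi a
        have : MapsTo (fun u => u * a) ((fun t => s * t) '' I.1) ((fun t => s * t) '' I.1) := by
          rintro _ ⟨t, ht, rfl⟩
          exact ⟨t * a, I.2.2.1 t ht a, (mul_assoc _ _ _).symm⟩
        exact this.closure (hmulR a) hi, isClosed_closure⟩
      have hcl : IsClosed (f s '' B I) := (isClosed_closure.isCompact.image (hf s)).isClosed
      have hsub : B sI ⊆ f s '' B I := by
        refine closure_minimal ?_ hcl
        rintro _ ⟨t, ht, x, -, rfl⟩
        have : closure ((fun t => s * t) '' I.1) ⊆ (fun t => f t x) ⁻¹' (f s '' B I) := by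
          refine closure_minimal ?_ (hcl.preimage (hft x))
          rintro _ ⟨t, ht, rfl⟩
          exact ⟨f t x, subset_closure ⟨t, ht, x, mem_univ _, rfl⟩, (hmul _ _ _).symm⟩
        exact this ht
      obtain ⟨y, hy, hyz⟩ := hsub (mem_iInter.1 hz sI)
      exact ⟨y, hy, hyz⟩
    have hcl : ∀ I : ι, IsClosed (B I ∩ f s ⁻¹' {z}) := fun I =>
      isClosed_closure.inter (isClosed_singleton.preimage (hf s))
    obtain ⟨y, hy⟩ := IsCompact.nonempty_iInter_of_directed_nonempty_isCompact_isClosed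
      (fun I => B I ∩ f s ⁻¹' {z}) (by
        intro I J
        obtain ⟨L, h1, h2⟩ := hinf I J
        exact ⟨L, inter_subset_inter_left _ (hBmono _ _ h1),
          inter_subset_inter_left _ (hBmono _ _ h2)⟩) key
      (fun I => (hcl I).isCompact) hcl
    rw [mem_iInter] at hy
    exact ⟨y, mem_iInter.2 fun I => (hy I).1, (hy (Classical.arbitrary ι)).2⟩

/-- minimal co-invariant closed set -/
theorem aux_min {T X : Type*} 
    [TopologicalSpace X] [CompactSpace X] [T2Space X]
    (f : T → X → X) (hf : ∀ s, Continuous (f s))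
    (h : ∃ Z : Set X, IsClosed Z ∧ Z.Nonempty ∧ ∀ s, Z ⊆ f s '' Z) :
    ∃ Z : Set X, IsClosed Z ∧ Z.Nonempty ∧ (∀ s, Z ⊆ f s '' Z) ∧
      ∀ N : Set X, IsClosed N → N.Nonempty → (∀ s, N ⊆ f s '' N) → N ⊆ Z → N = Z := by
  obtain ⟨Z0, h0⟩ := h
  obtain ⟨Z, -, hZ⟩ := zorn_superset_nonempty
    {Z : Set X | IsClosed Z ∧ Z.Nonempty ∧ ∀ s, Z ⊆ f s '' Z} (by
      intro c hc hch hcne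
      have : Nonempty c := hcne.to_subtype
      have hdir : Directed (· ⊇ ·) (fun i : c => i.1) :=
        DirectedOn.directed_val (IsChain.directedOn hch.symm)
      refine ⟨⋂ i : c, i.1, ⟨isClosed_iInter fun i => (hc i.2).1, ?_, ?_⟩,
        fun s hs => iInter_subset (fun i : c => i.1) ⟨s, hs⟩⟩
      · exact IsCompact.nonempty_iInter_of_directed_nonempty_isCompact_isClosed _ hdir
          (fun i => (hc i.2).2.1) (fun i => (hc i.2).1.isCompact) (fun i => (hc i.2).1)
      · intro s z hz
        have hcl : ∀ i : c, IsClosed (i.1 ∩ f s ⁻¹' {z}) := fun i =>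
          (hc i.2).1.inter (isClosed_singleton.preimage (hf s))
        obtain ⟨y, hy⟩ := IsCompact.nonempty_iInter_of_directed_nonempty_isCompact_isClosed
          (fun i : c => i.1 ∩ f s ⁻¹' {z}) (by
            intro I J
            obtain ⟨L, h1, h2⟩ := hdir I J
            exact ⟨L, inter_subset_inter_left _ h1, inter_subset_inter_left _ h2⟩)
          (fun i => by
            obtain ⟨y, hy, hyz⟩ := (hc i.2).2.2 s (mem_iInter.1 hz i)
            exact ⟨y, hy, hyz⟩)
          (fun I => (hcl I).isCompact) hcl
        rw [mem_iInter] at hy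
        exact ⟨y, mem_iInter.2 fun I => (hy I).1, (hy (Classical.arbitrary c)).2⟩) Z0 h0
  refine ⟨Z, hZ.prop.1, hZ.prop.2.1, hZ.prop.2.2, fun N h1 h2 h3 h4 => ?_⟩
  exact subset_antisymm h4 (hZ.le_of_le ⟨h1, h2, h3⟩ h4)

/-- finite cover by sets of small diameter -/
def AuxSmall {X E : Type*} [PseudoMetricSpace E] (j : X → E) (ε : ℝ) (A : Set X) : Prop :=
  ∃ F : Set (Set X), F.Finite ∧ A ⊆ ⋃₀ F ∧ ∀ B ∈ F, ∀ x ∈ B, ∀ y ∈ B, dist (j x) (j y) ≤ ε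

theorem AuxSmall.mono {X E : Type*} [PseudoMetricSpace E] {j : X → E} {ε : ℝ} {A A' : Set X}
    (h : AuxSmall j ε A) (hA : A' ⊆ A) : AuxSmall j ε A' := by
  obtain ⟨F, h1, h2, h3⟩ := h
  exact ⟨F, h1, hA.trans h2, h3⟩

theorem AuxSmall.biUnion {X E ι : Type*} [PseudoMetricSpace E] {j : X → E} {ε : ℝ} {A : ι → Set X}
    (t : Finset ι) (h : ∀ i ∈ t, AuxSmall j ε (A i)) : AuxSmall j ε (⋃ i ∈ t, A i) := by
  choose! F h1 h2 h3 using h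
  refine ⟨⋃ i ∈ t, F i, t.finite_toSet.biUnion h1, ?_, ?_⟩
  · intro x hx
    simp only [mem_iUnion] at hx
    obtain ⟨i, hi, hx⟩ := hx
    obtain ⟨B, hB, hxB⟩ := h2 i hi hx
    exact ⟨B, mem_biUnion hi hB, hxB⟩
  · intro B hB
    simp only [mem_iUnion] at hB
    obtain ⟨i, hi, hB⟩ := hB
    exact h3 i hi B hB

theorem AuxSmall.image {X E : Type*} [PseudoMetricSpace E] {j : X → E} {ε : ℝ} {A : Set X}
    (h : AuxSmall j ε A) (g : X → X) (hg : ∀ x y, dist (j (g x)) (j (g y)) ≤ dist (j x) (j y)) :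
    AuxSmall j ε (g '' A) := by
  obtain ⟨F, h1, h2, h3⟩ := h
  refine ⟨(Set.image g) '' F, h1.image _, ?_, ?_⟩
  · rintro _ ⟨x, hx, rfl⟩
    obtain ⟨B, hB, hxB⟩ := h2 hx
    exact ⟨g '' B, ⟨B, hB, rfl⟩, x, hxB, rfl⟩
  · rintro _ ⟨B, hB, rfl⟩ _ ⟨x, hx, rfl⟩ _ ⟨y, hy, rfl⟩
    exact (hg x y).trans (h3 B hB x hx y hy)

theorem aux_small {T X E : Type*} [PseudoMetricSpace E]
    [TopologicalSpace X] [CompactSpace X] [T2Space X]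
    (f : T → X → X) (hf : ∀ s, Continuous (f s)) (j : X → E)
    (hj : ∀ s x y, dist (j (f s x)) (j (f s y)) ≤ dist (j x) (j y))
    (hball : ∀ e r, IsClosed {x | dist (j x) e ≤ r})
    (hsep : IsSeparable (range j))
    (Z : Set X) (hZc : IsClosed Z) (hZne : Z.Nonempty) (hZco : ∀ s, Z ⊆ f s '' Z)
    (hmin : ∀ N : Set X, IsClosed N → N.Nonempty → (∀ s, N ⊆ f s '' N) → N ⊆ Z → N = Z)
    (ε : ℝ) (hε : 0 < ε) : AuxSmall j ε Z := by
  let P : X → Prop := fun z => ∃ V, IsOpen V ∧ z ∈ V ∧ AuxSmall j ε (V ∩ Z)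
  let N : Set X := Z ∩ {z | ¬ P z}
  have hPo : IsOpen {z | P z} := by
    rw [isOpen_iff_forall_mem_open]
    rintro z ⟨V, hV, hz, hs⟩
    exact ⟨V, fun y hy => ⟨V, hV, hy, hs⟩, hV, hz⟩
  have hNc : IsClosed N := hZc.inter hPo.isClosed_compl
  -- compact sets in P are small
  have hcov : ∀ C : Set X, IsCompact C → (∀ x ∈ C, P x) →
      ∃ V, IsOpen V ∧ C ⊆ V ∧ AuxSmall j ε (V ∩ Z) := by
    intro C hC hP
    choose! V h1 h2 h3 using hP
    obtain ⟨t, ht, hCt⟩ := hC.elim_nhds_subcover V (fun x hx => (h1 x hx).mem_nhds (h2 x hx))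
    refine ⟨⋃ x ∈ t, V x, isOpen_biUnion fun x hx => h1 x (ht x hx), hCt, ?_⟩
    rw [iUnion₂_inter]
    exact AuxSmall.biUnion t fun x hx => h3 x (ht x hx)
  have hNco : ∀ s, N ⊆ f s '' N := by
    intro s z hz
    by_contra hcon
    have hC : IsCompact (Z ∩ f s ⁻¹' {z}) :=
      (hZc.inter (isClosed_singleton.preimage (hf s))).isCompact
    obtain ⟨V, hV, hCV, hVs⟩ := hcov _ hC (by
      intro x hx
      by_contra hxP
      exact hcon ⟨x, ⟨hx.1, hxP⟩, hx.2⟩)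
    have hK : IsClosed (f s '' (Z \ V)) :=
      ((hZc.sdiff hV).isCompact.image (hf s)).isClosed
    refine hz.2 ⟨(f s '' (Z \ V))ᶜ, hK.isOpen_compl, ?_, ?_⟩
    · rintro ⟨y, hy, hyz⟩
      exact hy.2 (hCV ⟨hy.1, hyz⟩)
    · refine (hVs.image (f s) (hj s)).mono ?_
      rintro y ⟨hy, hyZ⟩
      obtain ⟨x, hx, rfl⟩ := hZco s hyZ
      refine ⟨x, ⟨?_, hx⟩, rfl⟩
      by_contra hxV
      exact hy ⟨x, ⟨hx, hxV⟩, rfl⟩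
  have hNZ : N ≠ Z := by
    obtain ⟨c, hc, hcj⟩ := hsep
    have : CompactSpace Z := isCompact_iff_compactSpace.1 hZc.isCompact
    have : Nonempty Z := hZne.to_subtype
    have : Countable c := hc.to_subtype
    obtain ⟨e, he⟩ := nonempty_interior_of_iUnion_of_closed
      (f := fun e : c => {z : Z | dist (j z) e ≤ ε / 2})
      (fun e => (hball e (ε / 2)).preimage continuous_subtype_val) (by
        ext z
        simp only [mem_iUnion, mem_ofPred_eq, mem_univ, iff_true]
        obtain ⟨e, he, hd⟩ := Metric.mem_closure_iff.1 (hcj ⟨z.1, rfl⟩) (ε / 2) (by positivity)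
        exact ⟨⟨e, he⟩, hd.le⟩)
    obtain ⟨z, hz⟩ := he
    obtain ⟨U, hU, hUo, hzU⟩ := mem_interior.1 hz
    obtain ⟨V, hV, hVU⟩ := isOpen_induced_iff.1 hUo
    rw [← hVU] at hU hzU
    intro hEq
    have hzN : z.1 ∈ N := hEq.symm.subset z.2
    refine hzN.2 ⟨V, hV, hzU, {V ∩ Z}, finite_singleton _, by simp, ?_⟩
    intro B hB x hxB y hyB
    rw [mem_singleton_iff.1 hB] at hxB hyB
    obtain ⟨hx, hxZ⟩ := hxB
    obtain ⟨hy, hyZ⟩ := hyB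
    have h1 : dist (j x) e ≤ ε / 2 := @hU ⟨x, hxZ⟩ hx
    have h2 : dist (j y) e ≤ ε / 2 := @hU ⟨y, hyZ⟩ hy
    linarith [dist_triangle_right (j x) (j y) e]
  have hNe : ¬ N.Nonempty := fun h => hNZ (hmin N hNc h hNco inter_subset_left)
  obtain ⟨V, -, hZV, hs⟩ := hcov Z hZc.isCompact (by
    intro x hx
    by_contra hxP
    exact hNe ⟨x, hx, hxP⟩)
  exact hs.mono (subset_inter hZV subset_rfl)

theorem aux_weakClosed {E : Type*} [NormedAddCommGroup E] [NormedSpace ℝ E] {C : Set E}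
    (hC : Convex ℝ C) (hcl : IsClosed C) : IsClosed (toWeakSpace ℝ E '' C) := by
  have := hC.toWeakSpace_closure ℝ
  rw [hcl.closure_eq] at this
  rw [this]
  exact isClosed_closure

theorem aux_normClosed {E : Type*} [NormedAddCommGroup E] [NormedSpace ℝ E] {C : Set E}
    (hcl : IsClosed (toWeakSpace ℝ E '' C)) : IsClosed C := by
  have h := hcl.preimage (toWeakSpaceCLM ℝ E).continuous
  have : (toWeakSpaceCLM ℝ E) ⁻¹' (toWeakSpace ℝ E '' C) = C :=
    preimage_image_eq C (toWeakSpace ℝ E).injective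
  rwa [this] at h

theorem aux_sep {T E : Type*} [TopologicalSpace T]
    [NormedAddCommGroup E] [NormedSpace ℝ E]
    (D : Set T) (hDc : D.Countable) (hD : Dense D)
    (K : Set E) (hKne : K.Nonempty) (hKconv : Convex ℝ K) (hKcl : IsClosed K)
    (act : T → E → E) (hmaps : ∀ s : T, Set.MapsTo (act s) K K)
    (hcontS : ∀ x ∈ K, Continuous fun s : T => toWeakSpace ℝ E (act s x))
    (hne : ∀ s : T, ∀ x ∈ K, ∀ y ∈ K, ‖act s x - act s y‖ ≤ ‖x - y‖) :
    ∃ C ⊆ K, C.Nonempty ∧ Convex ℝ C ∧ IsClosed C ∧ IsSeparable C ∧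
      ∀ s, MapsTo (act s) C C := by
  obtain ⟨x0, hx0⟩ := hKne
  have hact : ∀ s, ContinuousOn (act s) K := by
    intro s
    refine LipschitzOnWith.continuousOn (K := 1) (LipschitzOnWith.of_dist_le_mul ?_)
    intro x hx y hy
    simpa [dist_eq_norm] using hne s x hx y hy
  let step : Set E → Set E := fun M => K ∩ (Submodule.span ℝ (M ∪ ⋃ d ∈ D, act d '' M) : Set E)
  let c : ℕ → Set E := fun n => step^[n] {x0}
  have hcs : ∀ n, c (n + 1) = step (c n) := fun n => Function.iterate_succ_apply' step n _
  have hcK : ∀ n, c n ⊆ K := by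
    intro n
    cases n with
    | zero => simpa [c] using hx0
    | succ n => rw [hcs]; exact inter_subset_left
  have hcsucc : ∀ n, c n ⊆ c (n + 1) := by
    intro n x hx
    rw [hcs]
    exact ⟨hcK n hx, Submodule.subset_span (Or.inl hx)⟩
  have hmono : Monotone c := monotone_nat_of_le_succ hcsucc
  have hcD : ∀ n, ∀ d ∈ D, MapsTo (act d) (c n) (c (n + 1)) := by
    intro n d hd x hx
    rw [hcs]
    exact ⟨hmaps d (hcK n hx), Submodule.subset_span (Or.inr (mem_biUnion hd ⟨x, hx, rfl⟩))⟩
  have hcconv : ∀ n, Convex ℝ (c n) := by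
    intro n
    cases n with
    | zero => exact convex_singleton x0
    | succ n => rw [hcs]; exact hKconv.inter (Submodule.convex _)
  have hcsep : ∀ n, IsSeparable (c n) := by
    intro n
    induction n with
    | zero => exact (finite_singleton x0).isSeparable
    | succ n ih =>
      rw [hcs]
      refine IsSeparable.mono (IsSeparable.span ?_) inter_subset_right
      refine ih.union ?_
      have : Countable D := hDc.to_subtype
      rw [biUnion_eq_iUnion]
      refine IsSeparable.iUnion fun d => ?_
      have := ih.separableSpace
      rw [image_eq_range]
      exact isSeparable_range (((hact d).mono (hcK n)).domRestrict)
  let U := ⋃ n, c n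
  have hUK : U ⊆ K := iUnion_subset hcK
  have hCK : closure U ⊆ K := closure_minimal hUK hKcl
  have hUconv : Convex ℝ U := (hmono.directed_le).convex_iUnion hcconv
  have hUD : ∀ d ∈ D, MapsTo (act d) U U := by
    intro d hd x hx
    obtain ⟨n, hn⟩ := mem_iUnion.1 hx
    exact mem_iUnion.2 ⟨n + 1, hcD n d hd hn⟩
  refine ⟨closure U, hCK, ⟨x0, subset_closure (mem_iUnion.2 ⟨0, rfl⟩)⟩, hUconv.closure,
    isClosed_closure, (IsSeparable.iUnion hcsep).closure, ?_⟩
  have hwc := aux_weakClosed hUconv.closure isClosed_closure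
  intro s x hx
  have h1 : ∀ d ∈ D, act d x ∈ closure U := fun d hd =>
    ((hUD d hd).closure_of_continuousOn ((hact d).mono hCK)) hx
  have h2 : closure D ⊆ (fun s => toWeakSpace ℝ E (act s x)) ⁻¹' (toWeakSpace ℝ E '' closure U) :=
    closure_minimal (fun d hd => ⟨_, h1 d hd, rfl⟩) (hwc.preimage (hcontS x (hCK hx)))
  obtain ⟨y, hy, hyx⟩ := h2 (hD s)
  rwa [← (toWeakSpace ℝ E).injective hyx]

/-- minimal convex invariant set -/
theorem aux_minconv {T E : Type*}
    [NormedAddCommGroup E] [NormedSpace ℝ E]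
    (act : T → E → E) (C : Set E) (hCne : C.Nonempty) (hCconv : Convex ℝ C)
    (hCcomp : IsCompact (toWeakSpace ℝ E '' C)) (hCinv : ∀ s, MapsTo (act s) C C) :
    ∃ M ⊆ C, M.Nonempty ∧ Convex ℝ M ∧ IsClosed (toWeakSpace ℝ E '' M) ∧
      (∀ s, MapsTo (act s) M M) ∧
      ∀ N ⊆ M, N.Nonempty → Convex ℝ N → IsClosed (toWeakSpace ℝ E '' N) →
        (∀ s, MapsTo (act s) N N) → N = M := by
  obtain ⟨M, hMC, hM⟩ := zorn_superset_nonempty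
    {M : Set E | M ⊆ C ∧ M.Nonempty ∧ Convex ℝ M ∧ IsClosed (toWeakSpace ℝ E '' M) ∧
      (∀ s, MapsTo (act s) M M)} (by
      intro c hc hch hcne
      have : Nonempty c := hcne.to_subtype
      have himg : toWeakSpace ℝ E '' (⋂ i : c, i.1) = ⋂ i : c, toWeakSpace ℝ E '' i.1 :=
        image_iInter (toWeakSpace ℝ E).bijective _
      have hdir : Directed (· ⊇ ·) (fun i : c => i.1) :=
        DirectedOn.directed_val (IsChain.directedOn hch.symm)
      refine ⟨⋂ i : c, i.1, ⟨?_, ?_, ?_, ?_, ?_⟩,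
        fun s hs => iInter_subset (fun i : c => i.1) ⟨s, hs⟩⟩
      · exact (iInter_subset (fun i : c => i.1) (Classical.arbitrary c)).trans
          (hc (Classical.arbitrary c).2).1
      · rw [← image_nonempty (f := toWeakSpace ℝ E), himg]
        exact IsCompact.nonempty_iInter_of_directed_nonempty_isCompact_isClosed _
          (fun a b => by
            obtain ⟨L, h1, h2⟩ := hdir a b
            exact ⟨L, image_mono h1, image_mono h2⟩)
          (fun i => (hc i.2).2.1.image _)
          (fun i => hCcomp.of_isClosed_subset (hc i.2).2.2.2.1 (image_mono (hc i.2).1))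
          (fun i => (hc i.2).2.2.2.1)
      · exact convex_iInter fun i => (hc i.2).2.2.1
      · rw [himg]
        exact isClosed_iInter fun i => (hc i.2).2.2.2.1
      · intro s x hx
        rw [mem_iInter] at hx ⊢
        exact fun i => (hc i.2).2.2.2.2 s (hx i)) C
    ⟨subset_rfl, hCne, hCconv, hCcomp.isClosed, hCinv⟩
  refine ⟨M, hMC, hM.prop.2.1, hM.prop.2.2.1, hM.prop.2.2.2.1, hM.prop.2.2.2.2, ?_⟩
  intro N hNM h1 h2 h3 h4
  exact subset_antisymm hNM (hM.le_of_le ⟨hNM.trans hMC, h1, h2, h3, h4⟩ hNM)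

/-- DeMarr type lemma -/
theorem aux_deMarr {E : Type*} [NormedAddCommGroup E] [NormedSpace ℝ E]
    (Z : Set E) (hZ : TotallyBounded Z) (a b : E) (ha : a ∈ Z) (hb : b ∈ Z) (hab : a ≠ b) :
    ∃ u ∈ convexHull ℝ Z, ∃ r, (∀ z ∈ Z, ‖u - z‖ ≤ r) ∧ r < Metric.diam Z := by
  classical
  have hbd : Bornology.IsBounded Z := hZ.isBounded
  set d := Metric.diam Z with hd
  have hdpos : 0 < d := (dist_pos.2 hab).trans_le (Metric.dist_le_diam_of_mem hbd ha hb)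
  obtain ⟨t, htZ, htf, hcov⟩ := Metric.finite_approx_of_totallyBounded hZ (d / 2) (by positivity)
  lift t to Finset E using htf
  have htne : t.Nonempty := by
    obtain ⟨y, hy, -⟩ := mem_iUnion₂.1 (hcov ha)
    exact ⟨y, hy⟩
  have hn : (0 : ℝ) < t.card := by exact_mod_cast htne.card_pos
  have hw : ∑ _i ∈ t, (t.card : ℝ)⁻¹ = 1 := by
    rw [Finset.sum_const, nsmul_eq_mul, mul_inv_cancel₀ hn.ne']
  refine ⟨∑ y ∈ t, (t.card : ℝ)⁻¹ • y, ?_, d - (t.card : ℝ)⁻¹ * (d / 2), ?_, ?_⟩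
  · exact (convex_convexHull ℝ Z).sum_mem (fun _ _ => by positivity) hw
      (fun y hy => subset_convexHull ℝ Z (htZ hy))
  · intro z hz
    obtain ⟨y, hy, hzy⟩ := mem_iUnion₂.1 (hcov hz)
    have hy : y ∈ t := hy
    have e1 : (∑ y ∈ t, (t.card : ℝ)⁻¹ • y) - z = ∑ y ∈ t, (t.card : ℝ)⁻¹ • (y - z) := by
      simp only [smul_sub, Finset.sum_sub_distrib]
      rw [← Finset.sum_smul, hw, one_smul]
    rw [e1]
    have e2 : ∀ x ∈ t, ‖(t.card : ℝ)⁻¹ • (x - z)‖ ≤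
        (t.card : ℝ)⁻¹ * d - (if x = y then (t.card : ℝ)⁻¹ * (d / 2) else 0) := by
      intro x hx
      rw [norm_smul, Real.norm_of_nonneg (by positivity)]
      split_ifs with h
      · subst h
        have : ‖x - z‖ ≤ d / 2 := by
          rw [← dist_eq_norm, dist_comm]; exact (Metric.mem_ball.1 hzy).le
        have : (t.card : ℝ)⁻¹ * ‖x - z‖ ≤ (t.card : ℝ)⁻¹ * (d / 2) := by gcongr
        linarith
      · have : ‖x - z‖ ≤ d := by
          rw [← dist_eq_norm]; exact Metric.dist_le_diam_of_mem hbd (htZ hx) hz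
        have : (t.card : ℝ)⁻¹ * ‖x - z‖ ≤ (t.card : ℝ)⁻¹ * d := by gcongr
        linarith
    refine (norm_sum_le_of_le t e2).trans (le_of_eq ?_)
    rw [Finset.sum_sub_distrib, ← Finset.sum_mul, hw, Finset.sum_ite_eq' t y, if_pos hy, one_mul]
  · have : 0 < (t.card : ℝ)⁻¹ * (d / 2) := by positivity
    linarith

theorem aux_core {T E : Type*} [Semigroup T] [TopologicalSpace T] [Nonempty T]
    [NormedAddCommGroup E] [NormedSpace ℝ E]
    (hmulR : ∀ t : T, Continuous fun s => s * t)
    (D : Set T) (hDc : D.Countable) (hD : Dense D)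
    (hrev : ∀ I J : Set T, I.Nonempty → J.Nonempty →
        (∀ i ∈ I, ∀ a, i * a ∈ I) → (∀ j ∈ J, ∀ a, j * a ∈ J) →
        IsClosed I → IsClosed J → (I ∩ J).Nonempty)
    (K : Set E) (hKne : K.Nonempty) (hKconv : Convex ℝ K)
    (hKcomp : IsCompact (toWeakSpace ℝ E '' K))
    (act : T → E → E) (hmaps : ∀ s : T, Set.MapsTo (act s) K K)
    (haction : ∀ s t : T, ∀ x ∈ K, act (s * t) x = act s (act t x))
    (hcontS : ∀ x ∈ K, Continuous fun s : T => toWeakSpace ℝ E (act s x))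
    (hcontK : ∀ s : T, ContinuousOn
      (fun x : WeakSpace ℝ E => toWeakSpace ℝ E (act s ((toWeakSpace ℝ E).symm x)))
      (toWeakSpace ℝ E '' K))
    (hne : ∀ s : T, ∀ x ∈ K, ∀ y ∈ K, ‖act s x - act s y‖ ≤ ‖x - y‖) :
    ∃ x₀ ∈ K, ∀ s : T, act s x₀ = x₀ := by
  obtain ⟨C, hCK, hCne, hCconv, hCcl, hCsep, hCinv⟩ := aux_sep D hDc hD K hKne hKconv
    (aux_normClosed hKcomp.isClosed) act hmaps hcontS hne
  obtain ⟨M, hMC, hMne, hMconv, hMcl, hMinv, hMmin⟩ := aux_minconv act C hCne hCconv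
    (hKcomp.of_isClosed_subset (aux_weakClosed hCconv hCcl) (image_mono hCK)) hCinv
  have hMK := hMC.trans hCK
  have hMcomp : IsCompact (toWeakSpace ℝ E '' M) :=
    hKcomp.of_isClosed_subset hMcl (image_mono hMK)
  let X := ↥(toWeakSpace ℝ E '' M)
  have : CompactSpace X := isCompact_iff_compactSpace.1 hMcomp
  have : Nonempty X := (hMne.image _).to_subtype
  let j : X → E := fun x => (toWeakSpace ℝ E).symm x.1
  have hjM : ∀ x, j x ∈ M := by
    rintro ⟨_, y, hy, rfl⟩
    simpa [j] using hy
  have hjinj : Function.Injective j := fun x y h =>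
    Subtype.ext ((toWeakSpace ℝ E).symm.injective h)
  let f : T → X → X := fun s x => ⟨toWeakSpace ℝ E (act s (j x)), _, hMinv s (hjM x), rfl⟩
  have hjf : ∀ s x, j (f s x) = act s (j x) := fun s x => by simp [f, j]
  have hf : ∀ s, Continuous (f s) := fun s =>
    (((hcontK s).mono (image_mono hMK)).domRestrict).subtype_mk _
  have hft : ∀ x, Continuous fun t => f t x := fun x =>
    (hcontS (j x) (hMK (hjM x))).subtype_mk _
  have hmul : ∀ s t x, f (s * t) x = f s (f t x) := by
    intro s t x
    apply hjinj
    rw [hjf, hjf, hjf, haction _ _ _ (hMK (hjM x))]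
  obtain ⟨Z, hZc, hZne, hZco, hZmin⟩ := aux_min f hf (aux_coinv hmulR hrev f hf hft hmul)
  have hjne : ∀ s x y, dist (j (f s x)) (j (f s y)) ≤ dist (j x) (j y) := by
    intro s x y
    rw [hjf, hjf, dist_eq_norm, dist_eq_norm]
    exact hne s _ (hMK (hjM x)) _ (hMK (hjM y))
  have hball0 : ∀ (e : E) r, IsClosed (toWeakSpace ℝ E '' Metric.closedBall e r) := fun e r =>
    aux_weakClosed (convex_closedBall e r) Metric.isClosed_closedBall
  have hball : ∀ e r, IsClosed {x | dist (j x) e ≤ r} := by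
    intro e r
    have : {x | dist (j x) e ≤ r} = (Subtype.val : X → WeakSpace ℝ E) ⁻¹'
        (toWeakSpace ℝ E '' Metric.closedBall e r) := by
      ext x
      constructor
      · intro h
        exact ⟨j x, h, by simp [j]⟩
      · rintro ⟨y, hy, hyx⟩
        have : j x = y := by simp [j, ← hyx]
        change dist (j x) e ≤ r
        rw [this]; exact hy
    rw [this]
    exact (hball0 e r).preimage continuous_subtype_val
  have hsep : IsSeparable (range j) := hCsep.mono (by
    rintro _ ⟨x, rfl⟩; exact hMC (hjM x))
  have hsmall := aux_small f hf j hjne hball hsep Z hZc hZne hZco hZmin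
  have hTB : TotallyBounded (j '' Z) := by
    rw [Metric.totallyBounded_iff]
    intro ε hε
    obtain ⟨F, hF, hZF, hFd⟩ := hsmall (ε / 2) (by positivity)
    obtain ⟨x1, hx1⟩ := hZne
    have : ∀ B : Set X, ∃ x : X, B.Nonempty → x ∈ B := fun B => by
      by_cases h : B.Nonempty
      · exact ⟨h.some, fun _ => h.some_mem⟩
      · exact ⟨x1, fun h' => absurd h' h⟩
    choose p hp using this
    refine ⟨(fun B => j (p B)) '' F, hF.image _, ?_⟩
    rintro _ ⟨x, hx, rfl⟩
    obtain ⟨B, hB, hxB⟩ := hZF hx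
    refine mem_iUnion₂.2 ⟨_, ⟨B, hB, rfl⟩, ?_⟩
    have := hFd B hB x hxB _ (hp B ⟨x, hxB⟩)
    rw [Metric.mem_ball]
    linarith
  -- `Z` is a singleton
  have hsub : ∀ a ∈ Z, ∀ b ∈ Z, a = b := by
    intro a ha b hb
    by_contra hab
    obtain ⟨u, hu, r, hur, hrd⟩ := aux_deMarr (j '' Z) hTB (j a) (j b) ⟨a, ha, rfl⟩ ⟨b, hb, rfl⟩
      (fun h => hab (hjinj h))
    have huM : u ∈ M := convexHull_min (by rintro _ ⟨x, -, rfl⟩; exact hjM x) hMconv hu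
    let N : Set E := M ∩ ⋂ z : Z, Metric.closedBall (j z) r
    have hNconv : Convex ℝ N := hMconv.inter (convex_iInter fun z => convex_closedBall _ _)
    have hNcl : IsClosed N := (aux_normClosed hMcl).inter
      (isClosed_iInter fun z => Metric.isClosed_closedBall)
    have hNM : N = M := by
      refine hMmin N inter_subset_left ⟨u, huM, mem_iInter.2 fun z => ?_⟩ hNconv
        (aux_weakClosed hNconv hNcl) ?_
      · rw [mem_closedBall_iff_norm]; exact hur _ ⟨z, z.2, rfl⟩
      · rintro s x ⟨hxM, hx⟩
        refine ⟨hMinv s hxM, mem_iInter.2 fun z => ?_⟩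
        obtain ⟨y, hy, hyz⟩ := hZco s z.2
        have h1 := mem_iInter.1 hx ⟨y, hy⟩
        rw [mem_closedBall_iff_norm] at h1 ⊢
        rw [← hyz, hjf]
        exact (hne s _ (hMK hxM) _ (hMK (hjM y))).trans h1
    have : Metric.diam (j '' Z) ≤ r := by
      refine Metric.diam_le_of_forall_dist_le ((norm_nonneg _).trans (hur _ ⟨a, ha, rfl⟩)) ?_
      rintro _ ⟨x, hx, rfl⟩ _ ⟨y, hy, rfl⟩
      have : j x ∈ N := hNM ▸ hjM x
      exact mem_iInter.1 this.2 ⟨y, hy⟩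
    linarith
  obtain ⟨z, hz⟩ := hZne
  refine ⟨j z, hMK (hjM z), fun s => ?_⟩
  obtain ⟨y, hy, hyz⟩ := hZco s hz
  rw [hsub y hy z hz] at hyz
  rw [← hjf, hyz]


/-- let `S` be a strongly left reversible semitopological semigroup (every
separable closed subsemigroup of `S` is left reversible, i.e. its closed right ideals
pairwise intersect) and `K` a nonempty weakly compact convex subset of a Banach space.
Every separately weakly continuous nonexpansive action of `S` on `K` has a common fixed
point. -/
theorem common_fixed_point_strongly_leftReversible
    {S E : Type*} [Semigroup S] [TopologicalSpace S] [T2Space S]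
    [NormedAddCommGroup E] [NormedSpace ℝ E] [CompleteSpace E]
    -- `S` is a semitopological semigroup: multiplication is separately continuous
    (hmulL : ∀ t : S, Continuous fun s => t * s)
    (hmulR : ∀ t : S, Continuous fun s => s * t)
    -- `S` is strongly left reversible: every separable closed subsemigroup `A` of `S`
    -- is left reversible (any two of its closed right ideals intersect)
    (hslrev : ∀ A : Set S, A.Nonempty → (∀ a ∈ A, ∀ b ∈ A, a * b ∈ A) → IsClosed A →
      TopologicalSpace.IsSeparable A →
      ∀ I J : Set S, I ⊆ A → J ⊆ A → I.Nonempty → J.Nonempty →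
        (∀ i ∈ I, ∀ a ∈ A, i * a ∈ I) → (∀ j ∈ J, ∀ a ∈ A, j * a ∈ J) →
        IsClosed I → IsClosed J → (I ∩ J).Nonempty)
    (K : Set E) (hKne : K.Nonempty) (hKconv : Convex ℝ K)
    (hKcomp : IsCompact (toWeakSpace ℝ E '' K))
    (act : S → E → E) (hmaps : ∀ s : S, Set.MapsTo (act s) K K)
    (haction : ∀ s t : S, ∀ x ∈ K, act (s * t) x = act s (act t x))
    -- the action is separately weakly continuous
    (hcontS : ∀ x ∈ K, Continuous fun s : S => toWeakSpace ℝ E (act s x))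
    (hcontK : ∀ s : S, ContinuousOn
      (fun x : WeakSpace ℝ E => toWeakSpace ℝ E (act s ((toWeakSpace ℝ E).symm x)))
      (toWeakSpace ℝ E '' K))
    -- the action is nonexpansive
    (hne : ∀ s : S, ∀ x ∈ K, ∀ y ∈ K, ‖act s x - act s y‖ ≤ ‖x - y‖) :
    ∃ x₀ ∈ K, ∀ s : S, act s x₀ = x₀ := by
  classical
  let w := toWeakSpace ℝ E
  -- fixed point sets
  let Fx : S → Set (WeakSpace ℝ E) := fun s =>
    {x | x ∈ w '' K ∧ w (act s (w.symm x)) = x}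
  have hFcl : ∀ s, IsClosed (Fx s) := by
    intro s
    have h1 : ContinuousOn (fun x : WeakSpace ℝ E => (w (act s (w.symm x)), x)) (w '' K) :=
      (hcontK s).prodMk continuousOn_id
    exact h1.preimage_isClosed_of_isClosed hKcomp.isClosed isClosed_diagonal
  obtain ⟨x, hxK, hx⟩ := hKcomp.inter_iInter_nonempty Fx hFcl (by
    intro u
    rcases u.eq_empty_or_nonempty with rfl | hu
    · simpa using hKne
    let D : Subsemigroup S := Subsemigroup.closure (u : Set S)
    have hDc : (D : Set S).Countable := by
      have : Countable D := by
        have hle : D ≤ (FreeSemigroup.lift (Subtype.val : ↥(u : Set S) → S)).srange :=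
          Subsemigroup.closure_le.2 fun x hx => MulHom.mem_srange.2
            ⟨FreeSemigroup.of ⟨x, hx⟩, FreeSemigroup.lift_of _ _⟩
        have : Countable (FreeSemigroup (u : Set S)) := by
          refine Function.Injective.countable
            (f := fun a : FreeSemigroup (u : Set S) => (a.head, a.tail)) ?_
          intro a b h
          exact FreeSemigroup.ext (congrArg Prod.fst h) (congrArg Prod.snd h)
        have h2 : (range (FreeSemigroup.lift (Subtype.val : ↥(u : Set S) → S))).Countable :=
          countable_range _
        exact (h2.mono (fun x hx => hle hx)).to_subtype
      exact to_countable _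
    let A : Subsemigroup S :=
      { carrier := closure (D : Set S)
        mul_mem' := by
          intro a b ha hb
          have h1 : ∀ d ∈ D, d * b ∈ closure (D : Set S) := fun d hd =>
            (show MapsTo (fun s => d * s) (D : Set S) (D : Set S) from
              fun x hx => D.mul_mem hd hx).closure (hmulL d) hb
          have h2 : MapsTo (fun s => s * b) (closure (D : Set S))
              (closure (closure (D : Set S))) :=
            (show MapsTo (fun s => s * b) (D : Set S) (closure (D : Set S)) from h1).closure
              (hmulR b)
          rw [closure_closure] at h2
          exact h2 ha }
    have hAcl : IsClosed (A : Set S) := isClosed_closure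
    have hDA : (D : Set S) ⊆ A := subset_closure
    have huD : (u : Set S) ⊆ D := Subsemigroup.subset_closure
    have hAne : (A : Set S).Nonempty := by
      obtain ⟨s, hs⟩ := hu
      exact ⟨s, hDA (huD hs)⟩
    have : Nonempty A := hAne.to_subtype
    obtain ⟨x, hxK, hx⟩ := aux_core (T := A)
      (fun t => ((hmulR t).comp continuous_subtype_val).subtype_mk _)
      (Subtype.val ⁻¹' (D : Set S)) (hDc.preimage Subtype.val_injective)
      (by
        rw [Subtype.dense_iff]
        intro a ha
        refine closure_mono ?_ ha
        exact fun d hd => ⟨⟨d, hDA hd⟩, hd, rfl⟩)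
      (by
        intro I J hI hJ hIr hJr hIc hJc
        have hemb : Topology.IsClosedEmbedding (Subtype.val : A → S) :=
          hAcl.isClosedEmbedding_subtypeVal
        obtain ⟨_, ⟨i, hi, rfl⟩, ⟨j, hj, hij⟩⟩ := hslrev A hAne (fun a ha b hb => A.mul_mem ha hb)
          hAcl ⟨D, hDc, subset_rfl⟩
          (Subtype.val '' I) (Subtype.val '' J) (by rintro _ ⟨i, -, rfl⟩; exact i.2)
          (by rintro _ ⟨i, -, rfl⟩; exact i.2) (hI.image _) (hJ.image _)
          (by rintro _ ⟨i, hi, rfl⟩ a ha; exact ⟨i * ⟨a, ha⟩, hIr i hi _, rfl⟩)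
          (by rintro _ ⟨i, hi, rfl⟩ a ha; exact ⟨i * ⟨a, ha⟩, hJr i hi _, rfl⟩)
          (hemb.isClosedMap _ hIc) (hemb.isClosedMap _ hJc)
        exact ⟨i, hi, (Subtype.ext hij) ▸ hj⟩)
      K hKne hKconv hKcomp (fun s x => act s.1 x) (fun s => hmaps s.1)
      (fun s t x hx => haction s.1 t.1 x hx)
      (fun x hx => (hcontS x hx).comp continuous_subtype_val)
      (fun s => hcontK s.1) (fun s => hne s.1)
    refine ⟨w x, ⟨x, hxK, rfl⟩, mem_iInter₂.2 fun s hs => ⟨⟨x, hxK, rfl⟩, ?_⟩⟩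
    have := hx ⟨s, hDA (huD hs)⟩
    simpa using this)
  obtain ⟨y, hyK, rfl⟩ := hxK
  refine ⟨y, hyK, fun s => ?_⟩
  have := (mem_iInter.1 hx s).2
  exact w.injective this
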